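/- Assume m, n ≥ 7 and fix any σ* ∈ S_0. Then for every permutation σ of [n], the matrix P^[2]_σ lies in the ℝ-linear span of the set {P^[2]_τ : τ ∈ S_1 ∪ S_2} ∪ {P^[2]_{σ*}}. -/

import Mathlib

open Finset

/-- The matrix `P^[2]_σ`: entry at `((i,j),(k,l))` is `P_σ(i,j) · P_σ(k,l)`, where
`P_σ` is the permutation matrix of `σ`. -/
noncomputable def permMat2 {n : ℕ} (σ : Equiv.Perm (Fin n)) :
    (Fin n × Fin n) → (Fin n × Fin n) → ℝ :=
  fun p q => (if σ p.1 = p.2 then (1 : ℝ) else 0) * (if σ q.1 = q.2 then (1 : ℝ) else 0)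


/-- `Sk i j k`: the set of permutations `σ` such that `σ (i r) = j r` holds for exactly `k`
indices `r`. -/
def Sk {n m : ℕ} (i j : Fin m → Fin n) (k : ℕ) : Set (Equiv.Perm (Fin n)) :=
  {σ | (Finset.univ.filter (fun r : Fin m => σ (i r) = j r)).card = k}

/-
After composing with a permutation that sends each `i r` to `j r`, incidences become fixed points
in a set `M`. The function `permMat2` has degree two in the entries of the permutation matrix, so
its third differences along pairwise disjoint permutations vanish. Let `f` be its reduction
modulo the subgroup generated by `permMat2 σstar` and the matrices of permutations with one or
two fixed points in `M`. Cubes with two directions that are swaps destroying one fixed point each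
show that `f` takes a single value `v` on permutations with three fixed points. As a polynomial
of degree two in the number `k` of fixed points, `1 - k + k.choose 2` also has vanishing third
differences, and it equals `1, 0, 0, 1` for `k = 0, 1, 2, 3`; so `f - (1 - k + k.choose 2) • v`
vanishes for `1 ≤ k ≤ 3`. Cubes of swaps that destroy fixed points extend this to all `k ≥ 1`,
and a cube of swaps that create fixed points extends it to `k = 0`. There the multiplier of `v`
is `1`, so `f σstar = 0` forces `v = 0`.
-/

open Equiv

/-- A function on permutations is quadratic if its third differences along pairwise disjoint
permutations vanish; functions of degree at most two in the entries of the permutation matrix have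
this property. The terms are distributed over the two sides to avoid subtraction. -/
def IsQuadratic {α V : Type*} [AddCommGroup V] (f : Perm α → V) : Prop :=
  ∀ σ g₁ g₂ g₃ : Perm α, g₁.Disjoint g₂ → g₁.Disjoint g₃ → g₂.Disjoint g₃ →
    f σ + f (σ * g₁ * g₂) + f (σ * g₁ * g₃) + f (σ * g₂ * g₃) =
      f (σ * g₁) + f (σ * g₂) + f (σ * g₃) + f (σ * g₁ * g₂ * g₃)

/-- The fixed points of `σ` that lie in `M`. After composing with a permutation that sends each
`i r` to `j r`, the indices counted by `Sk i j` correspond to the points of `fixedIn (range i)`. -/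
def fixedIn {α : Type*} [DecidableEq α] (M : Finset α) (σ : Perm α) : Finset α :=
  {x ∈ M | σ x = x}

section Quadratic

variable {α V : Type*} [AddCommGroup V]

theorem isQuadratic_apply_apply (B : α → α → V) (p q : α) :
    IsQuadratic fun σ : Perm α => B (σ p) (σ q) := by
  intro σ g₁ g₂ g₃ h₁₂ h₁₃ h₂₃
  have two_fix (x : α) :
      (g₁ x = x ∧ g₂ x = x) ∨ (g₁ x = x ∧ g₃ x = x) ∨ (g₂ x = x ∧ g₃ x = x) := by
    have := h₁₂ x
    have := h₁₃ x
    have := h₂₃ x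
    tauto
  have comm₁₂ (x : α) : g₁ (g₂ x) = g₂ (g₁ x) := Perm.congr_fun h₁₂.commute.eq x
  have comm₁₃ (x : α) : g₁ (g₃ x) = g₃ (g₁ x) := Perm.congr_fun h₁₃.commute.eq x
  have comm₂₃ (x : α) : g₂ (g₃ x) = g₃ (g₂ x) := Perm.congr_fun h₂₃.commute.eq x
  rcases two_fix p with ⟨hp, hp'⟩ | ⟨hp, hp'⟩ | ⟨hp, hp'⟩ <;>
  rcases two_fix q with ⟨hq, hq'⟩ | ⟨hq, hq'⟩ | ⟨hq, hq'⟩ <;>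
  simp only [Perm.mul_apply, comm₁₂, comm₁₃, comm₂₃, hp, hp', hq, hq'] <;> abel

theorem isQuadratic_const (v : V) : IsQuadratic fun _ : Perm α => v :=
  fun _ _ _ _ _ _ _ => rfl

namespace IsQuadratic

variable {f g : Perm α → V}

theorem map {W : Type*} [AddCommGroup W] (hf : IsQuadratic f) (φ : V →+ W) :
    IsQuadratic fun σ => φ (f σ) := by
  intro σ g₁ g₂ g₃ h₁₂ h₁₃ h₂₃
  simpa only [map_add] using congrArg φ (hf σ g₁ g₂ g₃ h₁₂ h₁₃ h₂₃)

theorem comp_mul_left (hf : IsQuadratic f) (π : Perm α) : IsQuadratic fun σ => f (π * σ) := by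
  intro σ g₁ g₂ g₃ h₁₂ h₁₃ h₂₃
  simpa only [mul_assoc] using hf (π * σ) g₁ g₂ g₃ h₁₂ h₁₃ h₂₃

theorem add (hf : IsQuadratic f) (hg : IsQuadratic g) : IsQuadratic fun σ => f σ + g σ := by
  intro σ g₁ g₂ g₃ h₁₂ h₁₃ h₂₃
  have hsum := congrArg₂ (· + ·) (hf σ g₁ g₂ g₃ h₁₂ h₁₃ h₂₃) (hg σ g₁ g₂ g₃ h₁₂ h₁₃ h₂₃)
  convert hsum using 1 <;> beta_reduce <;> abel

theorem sub (hf : IsQuadratic f) (hg : IsQuadratic g) : IsQuadratic fun σ => f σ - g σ := by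
  simpa only [sub_eq_add_neg, AddMonoidHom.neg_apply, AddMonoidHom.id_apply] using
    hf.add (hg.map (-AddMonoidHom.id V))

theorem sum {ι : Type*} {s : Finset ι} {F : ι → Perm α → V} (hF : ∀ i ∈ s, IsQuadratic (F i)) :
    IsQuadratic fun σ => ∑ i ∈ s, F i σ := by
  intro σ g₁ g₂ g₃ h₁₂ h₁₃ h₂₃
  simp only [← sum_add_distrib]
  exact sum_congr rfl fun i hi => hF i hi σ g₁ g₂ g₃ h₁₂ h₁₃ h₂₃

end IsQuadratic

end Quadratic

theorem isQuadratic_permMat2 (n : ℕ) : IsQuadratic (permMat2 (n := n)) := by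
  intro σ g₁ g₂ g₃ h₁₂ h₁₃ h₂₃
  funext p q
  exact isQuadratic_apply_apply
    (fun u v => (if u = p.2 then (1 : ℝ) else 0) * (if v = q.2 then (1 : ℝ) else 0))
    p.1 q.1 σ g₁ g₂ g₃ h₁₂ h₁₃ h₂₃

section FixedIn

variable {α : Type*} [DecidableEq α] {M : Finset α} {σ : Perm α} {a b c x y : α}

@[simp]
theorem mem_fixedIn : x ∈ fixedIn M σ ↔ x ∈ M ∧ σ x = x :=
  mem_filter

theorem isQuadratic_card_fixedIn (M : Finset α) :
    IsQuadratic fun σ : Perm α => (#(fixedIn M σ) : ℤ) := by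
  simp only [fixedIn, card_filter, Nat.cast_sum]
  exact .sum fun x _ => isQuadratic_apply_apply (fun u _ => ((if u = x then 1 else 0 : ℕ) : ℤ)) x x

theorem isQuadratic_card_fixedIn_choose_two (M : Finset α) :
    IsQuadratic fun σ : Perm α => ((#(fixedIn M σ)).choose 2 : ℤ) := by
  have count_pairs (σ : Perm α) : ((#(fixedIn M σ)).choose 2 : ℤ) =
      ∑ s ∈ M.powersetCard 2, if ∀ x ∈ s, σ x = x then 1 else 0 := by
    rw [← card_powersetCard, sum_boole]
    congr 2
    ext s
    simp only [mem_powersetCard, mem_filter, subset_iff, mem_fixedIn]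
    grind
  simp only [count_pairs]
  refine .sum fun s hs => ?_
  obtain ⟨x, y, -, rfl⟩ := card_eq_two.1 (mem_powersetCard.1 hs).2
  simpa only [forall_mem_insert, mem_singleton, forall_eq] using
    isQuadratic_apply_apply (fun u v => if u = x ∧ v = y then (1 : ℤ) else 0) x y

theorem mem_fixedIn_mul_swap (hc : c ∈ fixedIn M σ) (hca : c ≠ a) (hcb : c ≠ b) :
    c ∈ fixedIn M (σ * swap a b) := by
  simpa [swap_apply_of_ne_of_ne hca hcb] using hc

theorem fixedIn_mul_swap_ssubset (ha : a ∈ fixedIn M σ) (hab : a ≠ b) :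
    fixedIn M (σ * swap a b) ⊂ fixedIn M σ := by
  have hσa := (mem_fixedIn.1 ha).2
  have hσb : σ b ≠ a := fun h => hab (σ.injective (hσa.trans h.symm))
  refine (ssubset_iff_of_subset fun x hx => ?_).2 ⟨a, ha, by simp [hσb]⟩
  simp only [mem_fixedIn, Perm.mul_apply, swap_apply_def] at hx ⊢
  grind

theorem fixedIn_mul_swap_of_mem_of_notMem (ha : a ∈ fixedIn M σ) (hb : b ∉ fixedIn M σ) :
    fixedIn M (σ * swap a b) = (fixedIn M σ).erase a := by
  have hσ : σ b = σ a ↔ b = a := σ.injective.eq_iff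
  ext x
  simp only [mem_fixedIn, mem_erase, Perm.mul_apply, swap_apply_def] at *
  grind

theorem fixedIn_mul_swap_eq (ha : a ∉ fixedIn M σ) (hb : b ∉ fixedIn M σ)
    (hab : a ∈ M → σ b ≠ a) (hba : b ∈ M → σ a ≠ b) :
    fixedIn M (σ * swap a b) = fixedIn M σ := by
  ext x
  simp only [mem_fixedIn, Perm.mul_apply, swap_apply_def] at *
  grind

theorem fixedIn_exchange (hx : x ∈ fixedIn M σ) (hyM : y ∈ M) (hy : y ∉ fixedIn M σ) :
    fixedIn M (σ * swap y (σ⁻¹ y) * swap x (σ⁻¹ y)) = insert y ((fixedIn M σ).erase x) := by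
  have hu : σ (σ⁻¹ y) = y := σ.apply_symm_apply y
  have hσ : σ y = σ x ↔ y = x := σ.injective.eq_iff
  ext z
  simp only [mem_fixedIn, mem_insert, mem_erase, Perm.mul_apply, swap_apply_def] at *
  grind

end FixedIn

theorem disjoint_swap_of_apply_eq {α : Type*} [DecidableEq α] {g : Perm α} {a b : α}
    (ha : g a = a) (hb : g b = b) : g.Disjoint (swap a b) := by
  intro x
  rw [swap_apply_def]
  grind

theorem disjoint_swap_inv_apply {α : Type*} [DecidableEq α] {σ : Perm α} {a b : α}
    (hb : b ∉ ({a, σ a, σ⁻¹ a} : Finset α)) :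
    (swap a (σ⁻¹ a)).Disjoint (swap b (σ⁻¹ b)) := by
  simp only [mem_insert, mem_singleton, not_or] at hb
  obtain ⟨hba, hbσ, hbσ'⟩ := hb
  refine disjoint_swap_of_apply_eq (swap_apply_of_ne_of_ne hba hbσ') ?_
  exact swap_apply_of_ne_of_ne (fun h => hbσ (Perm.inv_eq_iff_eq.1 h))
    fun h => hba (σ⁻¹.injective h)

section Vanishing

variable {α V : Type*} [DecidableEq α] [AddCommGroup V] {M : Finset α} {f : Perm α → V}
  {σ σ' : Perm α}

namespace IsQuadratic

theorem eq_of_eqOn (hf : IsQuadratic f)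
    (h₁₂ : ∀ ρ, #(fixedIn M ρ) = 1 ∨ #(fixedIn M ρ) = 2 → f ρ = 0)
    (hσ : #(fixedIn M σ) = 3) (hσ' : #(fixedIn M σ') = 3)
    (hfix : 1 < #(fixedIn M σ ∩ fixedIn M σ')) {B : Finset α} (hB : 1 < #B)
    (hBσ : Disjoint B (fixedIn M σ)) (hBσ' : Disjoint B (fixedIn M σ'))
    (heq : ∀ b ∈ B, σ b = σ' b) : f σ = f σ' := by
  obtain ⟨a, ha, d, hd, had⟩ := one_lt_card.1 hfix
  obtain ⟨b, hb, c, hc, hbc⟩ := one_lt_card.1 hB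
  rw [mem_inter] at ha hd
  rw [disjoint_left] at hBσ hBσ'
  have quotient_fix {x : α} (hx : σ x = σ' x) : (σ⁻¹ * σ') x = x :=
    Perm.inv_eq_iff_eq.2 hx.symm
  have fix_eq {x : α} (hx : x ∈ fixedIn M σ) (hx' : x ∈ fixedIn M σ') : σ x = σ' x := by
    rw [(mem_fixedIn.1 hx).2, (mem_fixedIn.1 hx').2]
  have vanish {ρ : Perm α} (hρ : #(fixedIn M ρ) = 3) (ha : a ∈ fixedIn M ρ)
      (hd : d ∈ fixedIn M ρ) (hb : b ∉ fixedIn M ρ) (hc : c ∉ fixedIn M ρ) :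
      f (ρ * swap a b) = 0 ∧ f (ρ * swap d c) = 0 ∧ f (ρ * swap a b * swap d c) = 0 := by
    have hab := fixedIn_mul_swap_of_mem_of_notMem ha hb
    have hdc := fixedIn_mul_swap_of_mem_of_notMem hd hc
    have hd' : d ∈ (fixedIn M ρ).erase a := mem_erase.2 ⟨had.symm, hd⟩
    have habdc := fixedIn_mul_swap_of_mem_of_notMem (hab ▸ hd')
      (hab ▸ fun h => hc (mem_of_mem_erase h))
    refine ⟨h₁₂ _ (.inr ?_), h₁₂ _ (.inr ?_), h₁₂ _ (.inl ?_)⟩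
    · rw [hab, card_erase_of_mem ha, hρ]
    · rw [hdc, card_erase_of_mem hd, hρ]
    · rw [habdc, hab, card_erase_of_mem hd', card_erase_of_mem ha, hρ]
  -- All terms of this cube other than `f σ` and `f σ'` have one or two fixed points in `M`.
  have hcube := hf σ (σ⁻¹ * σ') (swap a b) (swap d c)
    (disjoint_swap_of_apply_eq (quotient_fix (fix_eq ha.1 ha.2)) (quotient_fix (heq b hb)))
    (disjoint_swap_of_apply_eq (quotient_fix (fix_eq hd.1 hd.2)) (quotient_fix (heq c hc)))
    (Perm.disjoint_swap_swap (by grind))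
  obtain ⟨h₁, h₂, h₃⟩ := vanish hσ ha.1 hd.1 (hBσ hb) (hBσ hc)
  obtain ⟨h₁', h₂', h₃'⟩ := vanish hσ' ha.2 hd.2 (hBσ' hb) (hBσ' hc)
  simpa [mul_inv_cancel_left, h₁, h₂, h₃, h₁', h₂', h₃'] using hcube

theorem eq_of_apply_eq_of_ne_of_ne (hf : IsQuadratic f)
    (h₁₂ : ∀ ρ, #(fixedIn M ρ) = 1 ∨ #(fixedIn M ρ) = 2 → f ρ = 0) (hM : 7 ≤ #M)
    (hσ : #(fixedIn M σ) = 3) (hσ' : #(fixedIn M σ') = 3)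
    (hfix : 1 < #(fixedIn M σ ∩ fixedIn M σ')) {x y : α}
    (hsub : fixedIn M σ' ⊆ insert x (fixedIn M σ))
    (heq : ∀ b ∉ fixedIn M σ, b ≠ x → b ≠ y → σ b = σ' b) : f σ = f σ' := by
  have hcard : 1 < #(M \ insert x (insert y (fixedIn M σ))) := by
    have hx := card_insert_le x (insert y (fixedIn M σ))
    have hy := card_insert_le y (fixedIn M σ)
    have hB := le_card_sdiff (insert x (insert y (fixedIn M σ))) M
    omega
  have hB {b : α} (hb : b ∈ M \ insert x (insert y (fixedIn M σ))) :
      b ≠ x ∧ b ≠ y ∧ b ∉ fixedIn M σ := by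
    simpa only [mem_insert, not_or] using (mem_sdiff.1 hb).2
  refine hf.eq_of_eqOn h₁₂ hσ hσ' hfix hcard (disjoint_left.2 fun b hb => (hB hb).2.2)
    (disjoint_left.2 fun b hb hb' => ?_) fun b hb => heq b (hB hb).2.2 (hB hb).1 (hB hb).2.1
  exact (mem_insert.1 (hsub hb')).elim (hB hb).1 (hB hb).2.2

theorem apply_mul_swap_eq (hf : IsQuadratic f)
    (h₁₂ : ∀ ρ, #(fixedIn M ρ) = 1 ∨ #(fixedIn M ρ) = 2 → f ρ = 0) (hM : 7 ≤ #M)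
    (hσ : #(fixedIn M σ) = 3) {x y : α} (hx : x ∉ fixedIn M σ) (hy : y ∉ fixedIn M σ)
    (hxy : x ∈ M → σ y ≠ x) (hyx : y ∈ M → σ x ≠ y) : f (σ * swap x y) = f σ := by
  have hfixed := fixedIn_mul_swap_eq hx hy hxy hyx
  refine (hf.eq_of_apply_eq_of_ne_of_ne h₁₂ hM hσ (hfixed ▸ hσ) (x := x) (y := y) ?_ ?_ ?_).symm
  · rw [hfixed, inter_self]
    omega
  · exact hfixed ▸ subset_insert x _
  · intro b _ hbx hby
    rw [Perm.mul_apply, swap_apply_of_ne_of_ne hbx hby]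

theorem eq_of_fixedIn_eq_of_apply_eq (hf : IsQuadratic f)
    (h₁₂ : ∀ ρ, #(fixedIn M ρ) = 1 ∨ #(fixedIn M ρ) = 2 → f ρ = 0) (hM : 7 ≤ #M)
    (hσ : #(fixedIn M σ) = 3) (hfixed : fixedIn M σ = fixedIn M σ') {q : α} (hqM : q ∈ M)
    (hq : q ∉ fixedIn M σ) (heq : σ q = σ' q) : f σ = f σ' := by
  obtain ⟨x, hσx⟩ := σ.surjective q
  obtain ⟨y, hσy⟩ := σ.surjective (σ' x)
  have hfix (z : α) (hz : z ∈ M) : σ z = z ↔ σ' z = z := by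
    simpa [hz] using Finset.ext_iff.1 hfixed z
  have hqx : q ≠ x := fun h => hq (mem_fixedIn.2 ⟨hqM, by rw [h, hσx, h]⟩)
  have hqy : q ≠ y := fun h => hqx (σ'.injective (by rw [← heq, h, hσy]))
  have hx : x ∉ fixedIn M σ := fun h => hqx (hσx.symm.trans (mem_fixedIn.1 h).2)
  have hy : y ∉ fixedIn M σ := fun h => by
    obtain ⟨hyM, hy⟩ := mem_fixedIn.1 h
    have hyx : y = x := σ'.injective (by rw [(hfix y hyM).1 hy, ← hσy, hy])
    exact hx (hyx ▸ h)
  have hxy (hxM : x ∈ M) : σ y ≠ x := fun h =>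
    hx (mem_fixedIn.2 ⟨hxM, (hfix x hxM).2 (hσy ▸ h)⟩)
  have hρ := fixedIn_mul_swap_eq hx hy hxy fun _ h => hqy (hσx.symm.trans h)
  have hdisj : Disjoint {q, x} (fixedIn M σ) := by simp [-mem_fixedIn, hq, hx]
  rw [← hf.apply_mul_swap_eq h₁₂ hM hσ hx hy hxy fun _ h => hqy (hσx.symm.trans h)]
  refine hf.eq_of_eqOn h₁₂ (hρ ▸ hσ) (hfixed ▸ hσ) (by rw [hρ, ← hfixed, inter_self]; omega)
    (B := {q, x}) (by rw [card_pair hqx]; omega) (hρ ▸ hdisj) (hfixed ▸ hdisj) ?_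
  simp [swap_apply_of_ne_of_ne hqx hqy, heq, hσy]

theorem eq_of_fixedIn_eq_of_apply_apply_ne (hf : IsQuadratic f)
    (h₁₂ : ∀ ρ, #(fixedIn M ρ) = 1 ∨ #(fixedIn M ρ) = 2 → f ρ = 0) (hM : 7 ≤ #M)
    (hσ : #(fixedIn M σ) = 3) (hfixed : fixedIn M σ = fixedIn M σ') {q : α} (hqM : q ∈ M)
    (hq : q ∉ fixedIn M σ) (hne : σ (σ q) ≠ σ' q) : f σ = f σ' := by
  obtain ⟨y, hσy⟩ := σ.surjective (σ' q)
  have hy : y ∉ fixedIn M σ := fun h => by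
    have hσ'y : σ' y = σ' q := by
      rw [(mem_fixedIn.1 (hfixed ▸ h)).2, ← hσy, (mem_fixedIn.1 h).2]
    exact hq (σ'.injective hσ'y ▸ h)
  have hqy (_ : q ∈ M) : σ y ≠ q := fun h =>
    hq (hfixed ▸ mem_fixedIn.2 ⟨hqM, hσy.symm.trans h⟩)
  have hyq (_ : y ∈ M) : σ q ≠ y := fun h => hne (by rw [h, hσy])
  have hρ := fixedIn_mul_swap_eq hq hy hqy hyq
  rw [← hf.apply_mul_swap_eq h₁₂ hM hσ hq hy hqy hyq]
  exact hf.eq_of_fixedIn_eq_of_apply_eq h₁₂ hM (hρ ▸ hσ) (hρ.trans hfixed) hqM (hρ ▸ hq)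
    (by simp [hσy])

theorem eq_of_fixedIn_eq (hf : IsQuadratic f)
    (h₁₂ : ∀ ρ, #(fixedIn M ρ) = 1 ∨ #(fixedIn M ρ) = 2 → f ρ = 0) (hM : 7 ≤ #M)
    (hσ : #(fixedIn M σ) = 3) (hfixed : fixedIn M σ = fixedIn M σ') :
    f σ = f σ' := by
  obtain ⟨q, hqM, hq⟩ := exists_mem_notMem_of_card_lt_card (by omega : #(fixedIn M σ) < #M)
  by_cases hne : σ (σ q) = σ' q
  swap
  · exact hf.eq_of_fixedIn_eq_of_apply_apply_ne h₁₂ hM hσ hfixed hqM hq hne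
  -- Redirecting `q` through `w` breaks the coincidence `σ (σ q) = σ' q`.
  obtain ⟨w, -, hw⟩ : ∃ w ∈ M, w ∉ {q, σ q, σ⁻¹ q} ∪ fixedIn M σ := by
    refine exists_mem_notMem_of_card_lt_card ?_
    have hunion := card_union_le {q, σ q, σ⁻¹ q} (fixedIn M σ)
    have hthree := card_le_three (a := q) (b := σ q) (c := σ⁻¹ q)
    omega
  simp only [mem_union, mem_insert, mem_singleton, not_or] at hw
  obtain ⟨⟨hwq, hwσ, hwσ'⟩, hwF⟩ := hw
  have hσw : σ q ≠ w := Ne.symm hwσ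
  have hσq : σ q ≠ q := fun h => hq (mem_fixedIn.2 ⟨hqM, h⟩)
  have hqw (_ : q ∈ M) : σ w ≠ q := fun h => hwσ' (Perm.eq_inv_iff_eq.2 h)
  have hρ := fixedIn_mul_swap_eq hq hwF hqw fun _ => hσw
  rw [← hf.apply_mul_swap_eq h₁₂ hM hσ hq hwF hqw fun _ => hσw]
  refine hf.eq_of_fixedIn_eq_of_apply_apply_ne h₁₂ hM (hρ ▸ hσ) (hρ.trans hfixed) hqM (hρ ▸ hq)
    fun h => hwq ?_
  have hagree : (σ * swap q w) (σ w) = (σ * swap q w) (σ q) := by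
    rw [Perm.mul_apply _ _ (σ q), swap_apply_of_ne_of_ne hσq hσw, hne, ← h]
    simp
  exact σ.injective ((σ * swap q w).injective hagree)

theorem exists_exchange (hf : IsQuadratic f)
    (h₁₂ : ∀ ρ, #(fixedIn M ρ) = 1 ∨ #(fixedIn M ρ) = 2 → f ρ = 0) (hM : 7 ≤ #M)
    (hσ : #(fixedIn M σ) = 3) {x y : α} (hx : x ∈ fixedIn M σ) (hyM : y ∈ M)
    (hy : y ∉ fixedIn M σ) :
    ∃ ρ, fixedIn M ρ = insert y ((fixedIn M σ).erase x) ∧ f ρ = f σ := by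
  have hρ := fixedIn_exchange hx hyM hy
  have hy' : y ∉ (fixedIn M σ).erase x := fun h => hy (mem_of_mem_erase h)
  refine ⟨_, hρ, (hf.eq_of_apply_eq_of_ne_of_ne h₁₂ hM hσ ?_ ?_
    (x := y) (y := σ⁻¹ y) ?_ ?_).symm⟩
  · rw [hρ, card_insert_of_notMem hy', card_erase_of_mem hx, hσ]
  · rw [hρ, inter_insert_of_notMem hy, inter_eq_right.2 (erase_subset _ _),
      card_erase_of_mem hx, hσ]
    omega
  · exact hρ ▸ insert_subset_insert y (erase_subset _ _)
  · intro b hb hby hbu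
    have hbx : b ≠ x := fun h => hb (h ▸ hx)
    simp only [Perm.mul_apply, swap_apply_of_ne_of_ne hbx hbu, swap_apply_of_ne_of_ne hby hbu]

theorem eq_of_card_fixedIn_eq_three (hf : IsQuadratic f)
    (h₁₂ : ∀ ρ, #(fixedIn M ρ) = 1 ∨ #(fixedIn M ρ) = 2 → f ρ = 0) (hM : 7 ≤ #M)
    (hσ : #(fixedIn M σ) = 3) (hσ' : #(fixedIn M σ') = 3) : f σ = f σ' := by
  induction hd : #(fixedIn M σ' \ fixedIn M σ) generalizing σ with
  | zero =>
    have hsub := sdiff_eq_empty_iff_subset.1 (card_eq_zero.1 hd)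
    exact hf.eq_of_fixedIn_eq h₁₂ hM hσ (eq_of_subset_of_card_le hsub (by omega)).symm
  | succ d ih =>
    obtain ⟨y, hy⟩ := card_pos.1 (by omega : 0 < #(fixedIn M σ' \ fixedIn M σ))
    obtain ⟨hy', hyσ⟩ := mem_sdiff.1 hy
    obtain ⟨x, hx, hx'⟩ : ∃ x ∈ fixedIn M σ, x ∉ fixedIn M σ' := by
      by_contra! hsub
      exact hyσ (eq_of_subset_of_card_le hsub (by omega) ▸ hy')
    obtain ⟨ρ, hρ, hfρ⟩ := hf.exists_exchange h₁₂ hM hσ hx (mem_fixedIn.1 hy').1 hyσ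
    have hy_erase : y ∉ (fixedIn M σ).erase x := fun h => hyσ (mem_of_mem_erase h)
    have hdiff : fixedIn M σ' \ fixedIn M ρ = (fixedIn M σ' \ fixedIn M σ).erase y := by
      rw [hρ]
      grind
    rw [← hfρ, ih]
    · rw [hρ, card_insert_of_notMem hy_erase, card_erase_of_mem hx, hσ]
    · rw [hdiff, card_erase_of_mem hy, hd, Nat.add_sub_cancel]

theorem eq_zero_of_forall_fixedIn_ssubset (hf : IsQuadratic f) {p a₁ a₂ a₃ b₁ b₂ b₃ : α}
    (hp : p ∈ fixedIn M σ) (ha₁ : a₁ ∈ fixedIn M σ) (ha₂ : a₂ ∈ fixedIn M σ)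
    (ha₃ : a₃ ∈ fixedIn M σ) (hnodup : [p, a₁, a₂, a₃, b₁, b₂, b₃].Nodup)
    (h : ∀ ρ, (fixedIn M ρ).Nonempty → fixedIn M ρ ⊂ fixedIn M σ → f ρ = 0) : f σ = 0 := by
  simp only [List.nodup_cons, List.mem_cons, List.not_mem_nil, or_false, not_or] at hnodup
  obtain ⟨⟨hpa₁, hpa₂, hpa₃, hpb₁, hpb₂, hpb₃⟩, ⟨ha₁₂, ha₁₃, hab₁₁, hab₁₂, hab₁₃⟩,
    ⟨ha₂₃, hab₂₁, hab₂₂, hab₂₃⟩, ⟨hab₃₁, hab₃₂, hab₃₃⟩, ⟨hb₁₂, hb₁₃⟩, hb₂₃, -⟩ := hnodup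
  have hcube := hf σ (swap a₁ b₁) (swap a₂ b₂) (swap a₃ b₃)
    (Perm.disjoint_swap_swap (by grind)) (Perm.disjoint_swap_swap (by grind))
    (Perm.disjoint_swap_swap (by grind))
  have vanish {ρ : Perm α} {a b : α} (hρ : fixedIn M ρ ⊆ fixedIn M σ) (hpρ : p ∈ fixedIn M ρ)
      (ha : a ∈ fixedIn M ρ) (hpa : p ≠ a) (hpb : p ≠ b) (hab : a ≠ b) : f (ρ * swap a b) = 0 :=
    h _ ⟨p, mem_fixedIn_mul_swap hpρ hpa hpb⟩ ((fixedIn_mul_swap_ssubset ha hab).trans_subset hρ)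
  have hsub₁ := (fixedIn_mul_swap_ssubset ha₁ hab₁₁).subset
  have hsub₂ := (fixedIn_mul_swap_ssubset ha₂ hab₂₂).subset
  have hp₁ := mem_fixedIn_mul_swap hp hpa₁ hpb₁
  have hp₂ := mem_fixedIn_mul_swap hp hpa₂ hpb₂
  have hp₁₂ := mem_fixedIn_mul_swap hp₁ hpa₂ hpb₂
  have hfix₂₁ := mem_fixedIn_mul_swap ha₂ (Ne.symm ha₁₂) hab₂₁
  have hfix₃₁ := mem_fixedIn_mul_swap ha₃ (Ne.symm ha₁₃) hab₃₁
  have hfix₃₂ := mem_fixedIn_mul_swap ha₃ (Ne.symm ha₂₃) hab₃₂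
  have hfix₃₁₂ := mem_fixedIn_mul_swap hfix₃₁ (Ne.symm ha₂₃) hab₃₂
  have hsub₁₂ := (fixedIn_mul_swap_ssubset hfix₂₁ hab₂₂).subset.trans hsub₁
  simpa only [vanish subset_rfl hp ha₁ hpa₁ hpb₁ hab₁₁, vanish subset_rfl hp ha₂ hpa₂ hpb₂ hab₂₂,
    vanish subset_rfl hp ha₃ hpa₃ hpb₃ hab₃₃, vanish hsub₁ hp₁ hfix₂₁ hpa₂ hpb₂ hab₂₂,
    vanish hsub₁ hp₁ hfix₃₁ hpa₃ hpb₃ hab₃₃, vanish hsub₂ hp₂ hfix₃₂ hpa₃ hpb₃ hab₃₃,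
    vanish hsub₁₂ hp₁₂ hfix₃₁₂ hpa₃ hpb₃ hab₃₃, add_zero] using hcube

theorem eq_zero_of_fixedIn_nonempty (hf : IsQuadratic f) (hM : 7 ≤ #M)
    (h : ∀ ρ, (fixedIn M ρ).Nonempty → #(fixedIn M ρ) ≤ 3 → f ρ = 0)
    (hσ : (fixedIn M σ).Nonempty) : f σ = 0 := by
  induction hF : fixedIn M σ using Finset.strongInduction generalizing σ with
  | H F ih =>
  subst hF
  obtain hcard | hcard := le_or_gt #(fixedIn M σ) 3
  · exact h σ hσ hcard
  obtain ⟨p, hp⟩ := hσ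
  obtain ⟨a₁, ha₁, a₂, ha₂, a₃, ha₃, ha₁₂, ha₁₃, ha₂₃⟩ :=
    two_lt_card.1 (by rw [card_erase_of_mem hp]; omega : 2 < #((fixedIn M σ).erase p))
  have hfour : #{p, a₁, a₂, a₃} ≤ 4 := card_le_four
  have hrest := le_card_sdiff {p, a₁, a₂, a₃} M
  obtain ⟨b₁, hb₁, b₂, hb₂, b₃, hb₃, hb₁₂, hb₁₃, hb₂₃⟩ :=
    two_lt_card.1 (by omega : 2 < #(M \ {p, a₁, a₂, a₃}))
  simp only [mem_sdiff, mem_insert, mem_singleton, mem_erase] at ha₁ ha₂ ha₃ hb₁ hb₂ hb₃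
  exact hf.eq_zero_of_forall_fixedIn_ssubset hp ha₁.2 ha₂.2 ha₃.2
    (b₁ := b₁) (b₂ := b₂) (b₃ := b₃) (by grind) fun ρ hρ hlt => ih _ hlt hρ rfl

theorem eq_zero_of_forall_fixedIn_nonempty (hf : IsQuadratic f) (hM : 7 ≤ #M)
    (h : ∀ ρ, (fixedIn M ρ).Nonempty → f ρ = 0) (σ : Perm α) : f σ = 0 := by
  have exists_notMem {T : Finset α} (hT : #T ≤ 6) : ∃ x ∈ M, x ∉ T :=
    exists_mem_notMem_of_card_lt_card (by omega)
  let N (x : α) : Finset α := {x, σ x, σ⁻¹ x}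
  have hN (x : α) : #(N x) ≤ 3 := card_le_three
  obtain ⟨a, haM, -⟩ := exists_notMem (T := ∅) (by simp)
  obtain ⟨b, hbM, hba⟩ := exists_notMem (T := N a) ((hN a).trans (by norm_num))
  obtain ⟨c, hcM, hc⟩ := exists_notMem (T := N a ∪ N b)
    ((card_union_le _ _).trans (add_le_add (hN a) (hN b)))
  obtain ⟨hca, hcb⟩ := not_or.1 (mem_union.not.1 hc)
  have created {x : α} (hx : x ∈ M) : x ∈ fixedIn M (σ * swap x (σ⁻¹ x)) := by simp [hx]
  have kept {ρ : Perm α} {x y : α} (hx : x ∈ fixedIn M ρ) (hy : y ∉ N x) :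
      x ∈ fixedIn M (ρ * swap y (σ⁻¹ y)) := by
    simp only [N, mem_insert, mem_singleton, not_or] at hy
    exact mem_fixedIn_mul_swap hx (Ne.symm hy.1) fun h => hy.2.1 (Perm.eq_inv_iff_eq.1 h).symm
  have vanish {ρ : Perm α} {x : α} (hx : x ∈ fixedIn M ρ) : f ρ = 0 := h ρ ⟨x, hx⟩
  have hcube := hf σ _ _ _ (disjoint_swap_inv_apply hba) (disjoint_swap_inv_apply hca)
    (disjoint_swap_inv_apply hcb)
  simpa only [vanish (created haM), vanish (created hbM), vanish (created hcM),
    vanish (kept (created haM) hba), vanish (kept (created haM) hca),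
    vanish (kept (created hbM) hcb), vanish (kept (kept (created haM) hba) hca), add_zero]
    using hcube

theorem exists_eq_zsmul (hf : IsQuadratic f) (hM : 7 ≤ #M)
    (h₁₂ : ∀ ρ, #(fixedIn M ρ) = 1 ∨ #(fixedIn M ρ) = 2 → f ρ = 0) :
    ∃ v : V, ∀ σ, f σ = (1 - #(fixedIn M σ) + (#(fixedIn M σ)).choose 2 : ℤ) • v := by
  obtain ⟨v, hv⟩ : ∃ v, ∀ ρ, #(fixedIn M ρ) = 3 → f ρ = v := by
    by_cases hthree : ∃ τ, #(fixedIn M τ) = 3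
    · obtain ⟨τ, hτ⟩ := hthree
      exact ⟨f τ, fun ρ hρ => hf.eq_of_card_fixedIn_eq_three h₁₂ hM hρ hτ⟩
    · exact ⟨0, fun ρ hρ => (hthree ⟨ρ, hρ⟩).elim⟩
  have hweight := ((isQuadratic_const 1).sub (isQuadratic_card_fixedIn M)).add
    (isQuadratic_card_fixedIn_choose_two M)
  have hdiff := hf.sub (hweight.map (zmultiplesHom V v))
  refine ⟨v, fun σ => sub_eq_zero.1 ?_⟩
  refine hdiff.eq_zero_of_forall_fixedIn_nonempty hM (fun ρ hρ => ?_) σ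
  refine hdiff.eq_zero_of_fixedIn_nonempty hM (fun ρ hρ hcard => ?_) hρ
  have hpos := hρ.card_pos
  rw [zmultiplesHom_apply]
  interval_cases hk : #(fixedIn M ρ)
  · simp [h₁₂ ρ (.inl hk)]
  · simp [h₁₂ ρ (.inr hk)]
  · simp [hv ρ hk]

end IsQuadratic

end Vanishing

theorem mem_Sk_iff_card_fixedIn {n m k : ℕ} {i j : Fin m → Fin n} (hi : Function.Injective i)
    {π : Perm (Fin n)} (hπ : ∀ r, π (i r) = j r) (σ : Perm (Fin n)) :
    σ ∈ Sk i j k ↔ #(fixedIn (univ.map ⟨i, hi⟩) (π⁻¹ * σ)) = k := by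
  simp only [Sk, Set.mem_ofPred_eq, fixedIn, filter_map, card_map, Function.comp_def,
    Function.Embedding.coeFn_mk, Perm.mul_apply, Perm.inv_eq_iff_eq, hπ]

theorem stmt8_general {n m : ℕ} (hm : 7 ≤ m) (i j : Fin m → Fin n)
    (hi : Function.Injective i) (hj : Function.Injective j)
    (σstar : Perm (Fin n)) (hσstar : σstar ∈ Sk i j 0) (σ : Perm (Fin n)) :
    permMat2 σ ∈
      AddSubgroup.closure (permMat2 '' (Sk i j 1 ∪ Sk i j 2) ∪ {permMat2 σstar}) := by
  set W := AddSubgroup.closure (permMat2 '' (Sk i j 1 ∪ Sk i j 2) ∪ {permMat2 σstar})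
  obtain ⟨π, hπ⟩ := Perm.exists_extending_pair i j hi hj
  have hf : IsQuadratic fun ρ => QuotientAddGroup.mk' W (permMat2 (π * ρ)) :=
    ((isQuadratic_permMat2 n).comp_mul_left π).map (QuotientAddGroup.mk' W)
  have mk_eq_zero {ρ : Perm (Fin n)} (hρ : permMat2 ρ ∈ W) :
      QuotientAddGroup.mk' W (permMat2 ρ) = 0 := (QuotientAddGroup.eq_zero_iff _).2 hρ
  obtain ⟨v, hv⟩ := hf.exists_eq_zsmul (M := univ.map ⟨i, hi⟩) (by simpa using hm) fun ρ hρ => by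
    refine mk_eq_zero (AddSubgroup.subset_closure (.inl ⟨π * ρ, ?_, rfl⟩))
    simpa only [Set.mem_union, mem_Sk_iff_card_fixedIn hi hπ, inv_mul_cancel_left] using hρ
  have hv_zero : v = 0 := by
    have hstar := hv (π⁻¹ * σstar)
    rw [(mem_Sk_iff_card_fixedIn hi hπ σstar).1 hσstar, mul_inv_cancel_left,
      mk_eq_zero (AddSubgroup.subset_closure (.inr rfl))] at hstar
    simpa using hstar.symm
  have hσ := hv (π⁻¹ * σ)
  rw [hv_zero, smul_zero, mul_inv_cancel_left] at hσ
  exact (QuotientAddGroup.eq_zero_iff _).1 hσ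

theorem stmt8 {n m : ℕ} (hmn : m ≤ n) (hm : 7 ≤ m) (hn : 7 ≤ n)
    (i j : Fin m → Fin n) (hi : Function.Injective i) (hj : Function.Injective j)
    (σstar : Equiv.Perm (Fin n)) (hσstar : σstar ∈ Sk i j 0)
    (σ : Equiv.Perm (Fin n)) :
    permMat2 σ ∈
      Submodule.span ℝ (permMat2 '' (Sk i j 1 ∪ Sk i j 2) ∪ {permMat2 σstar}) :=
  (AddSubgroup.closure_le (Submodule.span ℝ _).toAddSubgroup).2 Submodule.subset_span
    (stmt8_general hm i j hi hj σstar hσstar σ)
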